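/- Let (L, [·,·]_L, α) and (Γ, [·,·]_Γ, β) be multiplicative Hom-Lie superalgebras over F, let φ : L → Γ be an injective morphism of Hom-Lie superalgebras, let C be a Hom-Lie subsuperalgebra of Γ, and let [p] : C⁰ → C⁰ be a p-map on the multiplicative Hom-Lie superalgebra C. Assume that (φ(x))^{[p]} lies in the image of φ for every x ∈ (φ⁻¹(C))⁰. Then φ⁻¹(C), with bracket and structure map restricted from L and with the map [p]' : (φ⁻¹(C))⁰ → (φ⁻¹(C))⁰ defined by x^{[p]'} = φ⁻¹((φ(x))^{[p]}), is a restricted Hom-Lie superalgebra. -/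

import Mathlib

/-! Basic definitions: Hom-Lie superalgebras, restricted structures, etc. -/

/-- A Hom-Lie superalgebra over a field `F`: a `ℤ/2`-graded vector space with an even
bilinear bracket and an even linear map `α` satisfying super skew-symmetry and the
Hom-super Jacobi identity. -/
structure HomLieSuper (F : Type*) [Field F] (L : Type*) [AddCommGroup L] [Module F L] where
  grade : ZMod 2 → Submodule F L
  internal : DirectSum.IsInternal grade
  bracket : L →ₗ[F] L →ₗ[F] L
  α : L →ₗ[F] L
  bracket_even : ∀ i j : ZMod 2, ∀ x ∈ grade i, ∀ y ∈ grade j, bracket x y ∈ grade (i + j)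
  alpha_even : ∀ i : ZMod 2, ∀ x ∈ grade i, α x ∈ grade i
  skew : ∀ i j : ZMod 2, ∀ x ∈ grade i, ∀ y ∈ grade j,
    bracket x y = (-((-1 : F) ^ (i.val * j.val))) • bracket y x
  jacobi : ∀ i j k : ZMod 2, ∀ x ∈ grade i, ∀ y ∈ grade j, ∀ z ∈ grade k,
    ((-1 : F) ^ (i.val * k.val)) • bracket (α x) (bracket y z)
      + ((-1 : F) ^ (k.val * j.val)) • bracket (α z) (bracket x y)
      + ((-1 : F) ^ (j.val * i.val)) • bracket (α y) (bracket z x) = 0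

/-- Coefficient of `λ^j` in `(ad_α (λ•x + y))^k (x)`, where `(ad_α a)(b) = ⁅a, α b⁆`,
defined by recursion on `k`. -/
def adPolyCoeff {F : Type*} [Field F] {L : Type*} [AddCommGroup L] [Module F L]
    (b : L →ₗ[F] L →ₗ[F] L) (a : L →ₗ[F] L) (x y : L) : ℕ → ℕ → L
  | 0, 0 => x
  | 0, _ + 1 => 0
  | k + 1, 0 => b y (a (adPolyCoeff b a x y k 0))
  | k + 1, j + 1 => b x (a (adPolyCoeff b a x y k j)) + b y (a (adPolyCoeff b a x y k (j + 1)))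

/-- A `p`-semilinear map on a subset `V`: `f (k•x + y) = k^p • f x + f y`. -/
def IsPSemilinearOn (F : Type*) [Field F] {L : Type*} [AddCommGroup L] [Module F L]
    (p : ℕ) (V : Set L) (f : L → L) : Prop :=
  ∀ k : F, ∀ x ∈ V, ∀ y ∈ V, f (k • x + y) = k ^ p • f x + f y

namespace HomLieSuper

variable {F : Type*} [Field F] {L : Type*} [AddCommGroup L] [Module F L]

/-- Multiplicativity: `α ⁅x, y⁆ = ⁅α x, α y⁆`. -/
def Mult (S : HomLieSuper F L) : Prop :=
  ∀ x y : L, S.α (S.bracket x y) = S.bracket (S.α x) (S.α y)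

/-- `L⁰ = {x ∈ L₀ | α x = x}` as a set. -/
def zeroSet (S : HomLieSuper F L) : Set L := {x | x ∈ S.grade 0 ∧ S.α x = x}

/-- `L⁰` as a submodule of `L`. -/
def zeroSub (S : HomLieSuper F L) : Submodule F L where
  carrier := S.zeroSet
  add_mem' := by
    rintro a b ⟨ha0, ha⟩ ⟨hb0, hb⟩
    exact ⟨(S.grade 0).add_mem ha0 hb0, by simp [map_add, ha, hb]⟩
  zero_mem' := ⟨(S.grade 0).zero_mem, by simp⟩
  smul_mem' := by
    rintro c a ⟨ha0, ha⟩
    exact ⟨(S.grade 0).smul_mem c ha0, by simp [map_smul, ha]⟩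

/-- `H⁰ = {x ∈ H ∩ L₀ | α x = x}` for a subspace `H`. -/
def zeroOf (S : HomLieSuper F L) (H : Submodule F L) : Set L :=
  {x | x ∈ H ∧ x ∈ S.grade 0 ∧ S.α x = x}

/-- `ad_α a : b ↦ ⁅a, α b⁆` as an endomorphism of `L`. -/
def adA (S : HomLieSuper F L) (a : L) : Module.End F L := (S.bracket a) ∘ₗ S.α

/-- The `α`-centralizer `C_L(H) = {x | ⁅x, α y⁆ = 0 ∀ y ∈ H}`. -/
def centralizer (S : HomLieSuper F L) (H : Set L) : Set L :=
  {x | ∀ y ∈ H, S.bracket x (S.α y) = 0}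

/-- The `α`-center `C(L)`. -/
def center (S : HomLieSuper F L) : Set L := S.centralizer Set.univ

/-- `s_i(x, y)`: `i • s_i(x,y)` is the coefficient of `λ^(i-1)` in `(ad_α (λx+y))^(p-1) (x)`;
since `0 < i < p` this determines `s_i` as `(i : F)⁻¹` times that coefficient. -/
def sPoly (S : HomLieSuper F L) (p : ℕ) (x y : L) (i : ℕ) : L :=
  ((i : F)⁻¹) • adPolyCoeff S.bracket S.α x y (p - 1) (i - 1)

/-- `pm` is a `p`-map on the subalgebra `H` (with structure restricted from `L`). -/
def IsPMapOn (S : HomLieSuper F L) (p : ℕ) (H : Submodule F L) (pm : L → L) : Prop :=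
  (∀ x ∈ S.zeroOf H, pm x ∈ S.zeroOf H) ∧
  (∀ x ∈ S.zeroOf H, ∀ y ∈ H, ((S.adA x) ^ p) y = S.bracket (pm x) (S.α y)) ∧
  (∀ k : F, ∀ x ∈ S.zeroOf H, pm (k • x) = k ^ p • pm x) ∧
  (∀ x ∈ S.zeroOf H, ∀ y ∈ S.zeroOf H,
    pm (x + y) = pm x + pm y + ∑ i ∈ Finset.Icc 1 (p - 1), S.sPoly p x y i)

/-- `pm` is a `p`-map on `L` itself. -/
def IsPMap (S : HomLieSuper F L) (p : ℕ) (pm : L → L) : Prop := S.IsPMapOn p ⊤ pm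

/-- `H` is a Hom-Lie subsuperalgebra: a graded subspace, `α`-invariant, closed under bracket. -/
def IsSub (S : HomLieSuper F L) (H : Submodule F L) : Prop :=
  (∀ x ∈ H, ∃ x0 ∈ H ⊓ S.grade 0, ∃ x1 ∈ H ⊓ S.grade 1, x = x0 + x1) ∧
  (∀ x ∈ H, S.α x ∈ H) ∧
  (∀ x ∈ H, ∀ y ∈ H, S.bracket x y ∈ H)

/-- `U` is a Hom-Lie ideal: a graded subspace, `α`-invariant, with `⁅U, L⁆ ⊆ U`. -/
def IsIdeal (S : HomLieSuper F L) (U : Submodule F L) : Prop :=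
  (∀ x ∈ U, ∃ x0 ∈ U ⊓ S.grade 0, ∃ x1 ∈ U ⊓ S.grade 1, x = x0 + x1) ∧
  (∀ x ∈ U, S.α x ∈ U) ∧
  (∀ x ∈ U, ∀ y : L, S.bracket x y ∈ U)

/-- `L` is restrictable: `(ad_α x)^p ∈ ad_α L⁰` for every `x ∈ L⁰`. -/
def Restrictable (S : HomLieSuper F L) (p : ℕ) : Prop :=
  ∀ x ∈ S.zeroSet, ∃ y ∈ S.zeroSet, (S.adA x) ^ p = S.adA y

/-- The subalgebra `H` is restrictable (with structure restricted from `L`). -/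
def RestrictableOn (S : HomLieSuper F L) (p : ℕ) (H : Submodule F L) : Prop :=
  ∀ x ∈ S.zeroOf H, ∃ y ∈ S.zeroOf H, ∀ z ∈ H, ((S.adA x) ^ p) z = S.bracket y (S.α z)

end HomLieSuper

/-- A morphism of Hom-Lie superalgebras: an even linear map compatible with the brackets
and intertwining the structure maps. -/
def IsHomLieSuperMorphism {F : Type*} [Field F] {L : Type*} [AddCommGroup L] [Module F L]
    {G : Type*} [AddCommGroup G] [Module F G]
    (S : HomLieSuper F L) (T : HomLieSuper F G) (φ : L →ₗ[F] G) : Prop :=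
  (∀ i : ZMod 2, ∀ x ∈ S.grade i, φ x ∈ T.grade i) ∧
  (∀ u v : L, φ (S.bracket u v) = T.bracket (φ u) (φ v)) ∧
  (∀ x : L, φ (S.α x) = T.α (φ x))

/-- A Lie superalgebra over `F` (bracket even bilinear, super skew-symmetric,
super Jacobi identity). -/
structure LieSuper (F : Type*) [Field F] (L : Type*) [AddCommGroup L] [Module F L] where
  grade : ZMod 2 → Submodule F L
  internal : DirectSum.IsInternal grade
  bracket : L →ₗ[F] L →ₗ[F] L
  bracket_even : ∀ i j : ZMod 2, ∀ x ∈ grade i, ∀ y ∈ grade j, bracket x y ∈ grade (i + j)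
  skew : ∀ i j : ZMod 2, ∀ x ∈ grade i, ∀ y ∈ grade j,
    bracket x y = (-((-1 : F) ^ (i.val * j.val))) • bracket y x
  jacobi : ∀ i j k : ZMod 2, ∀ x ∈ grade i, ∀ y ∈ grade j, ∀ z ∈ grade k,
    ((-1 : F) ^ (i.val * k.val)) • bracket x (bracket y z)
      + ((-1 : F) ^ (k.val * j.val)) • bracket z (bracket x y)
      + ((-1 : F) ^ (j.val * i.val)) • bracket y (bracket z x) = 0

namespace LieSuper

variable {F : Type*} [Field F] {L : Type*} [AddCommGroup L] [Module F L]

/-- `ad x : b ↦ ⁅x, b⁆`. -/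
def ad (S : LieSuper F L) (x : L) : Module.End F L := S.bracket x

/-- `s_i(x, y)` for a Lie superalgebra: `i • s_i(x,y)` is the coefficient of `λ^(i-1)` in
`(ad (λx+y))^(p-1) (x)`. -/
def sPoly (S : LieSuper F L) (p : ℕ) (x y : L) (i : ℕ) : L :=
  ((i : F)⁻¹) • adPolyCoeff S.bracket LinearMap.id x y (p - 1) (i - 1)

/-- `pm` is a `p`-map making `S` a restricted Lie superalgebra. -/
def IsPMap (S : LieSuper F L) (p : ℕ) (pm : L → L) : Prop :=
  (∀ x ∈ S.grade 0, S.ad x ^ p = S.ad (pm x)) ∧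
  (∀ k : F, ∀ x ∈ S.grade 0, pm (k • x) = k ^ p • pm x) ∧
  (∀ x ∈ S.grade 0, ∀ y ∈ S.grade 0,
    pm (x + y) = pm x + pm y + ∑ i ∈ Finset.Icc 1 (p - 1), S.sPoly p x y i)

end LieSuper

/-- A Hom-associative superalgebra over `F`. -/
structure HomAssocSuper (F : Type*) [Field F] (A : Type*) [AddCommGroup A] [Module F A] where
  grade : ZMod 2 → Submodule F A
  internal : DirectSum.IsInternal grade
  mul : A →ₗ[F] A →ₗ[F] A
  α : A →ₗ[F] A
  mul_even : ∀ i j : ZMod 2, ∀ x ∈ grade i, ∀ y ∈ grade j, mul x y ∈ grade (i + j)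
  alpha_even : ∀ i : ZMod 2, ∀ x ∈ grade i, α x ∈ grade i
  assoc : ∀ x y z : A, mul (α x) (mul y z) = mul (mul x y) (α z)

/-!
A morphism commutes with taking graded components, so an injective one reflects degrees: the
components of `x` outside the degree of `φ x` have image zero. It likewise reflects `α x = x`,
whence `(φ⁻¹ C)⁰ = φ⁻¹ (C⁰)`. Since a morphism also commutes with powers of `ad_α` and with the
polynomials `s_i`, each axiom for `x ↦ φ⁻¹ ((φ x)^[p])` holds because its image under `φ` is the
same axiom for the `p`-map on `C`.
-/

section Decomposition

open DirectSum

variable {ι M N σ τ E : Type*} [DecidableEq ι] [AddCommMonoid M] [AddCommMonoid N]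
  [SetLike σ M] [AddSubmonoidClass σ M] [SetLike τ N] [AddSubmonoidClass τ N]
  {ℳ : ι → σ} {𝒩 : ι → τ} [Decomposition ℳ] [Decomposition 𝒩]
  [FunLike E M N] [AddMonoidHomClass E M N] {f : E}

lemma sum_decompose [Fintype ι] (x : M) : ∑ i, (decompose ℳ x i : M) = x := by
  classical
  conv_rhs => rw [← sum_support_decompose ℳ x]
  refine (Finset.sum_subset (Finset.subset_univ _) fun i _ hi => ?_).symm
  rw [DFinsupp.notMem_support_iff.1 hi, ZeroMemClass.coe_zero]

lemma map_decompose_of_map_mem (hf : ∀ i, ∀ x ∈ ℳ i, f x ∈ 𝒩 i) (x : M) (i : ι) :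
    f (decompose ℳ x i) = decompose 𝒩 (f x) i := by
  induction x using Decomposition.inductionOn ℳ with
  | zero => simp
  | @homogeneous j m =>
    obtain rfl | hij := eq_or_ne j i
    · rw [decompose_of_mem_same ℳ m.2, decompose_of_mem_same 𝒩 (hf j m m.2)]
    · rw [decompose_of_mem_ne ℳ m.2 hij, decompose_of_mem_ne 𝒩 (hf j m m.2) hij, map_zero]
  | add x y hx hy => simp [hx, hy]

lemma mem_of_map_mem_of_injective (hinj : Function.Injective f)
    (hf : ∀ i, ∀ x ∈ ℳ i, f x ∈ 𝒩 i) {x : M} {i : ι} (hx : f x ∈ 𝒩 i) : x ∈ ℳ i := by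
  have hxi : (decompose ℳ x i : M) = x :=
    hinj (by rw [map_decompose_of_map_mem hf, decompose_of_mem_same 𝒩 hx])
  exact hxi ▸ (decompose ℳ x i).2

lemma isHomogeneous_comap {R : Type*} [Semiring R] [Module R M] [Module R N] {g : M →ₗ[R] N}
    (hg : ∀ i, ∀ x ∈ ℳ i, g x ∈ 𝒩 i) {C : Submodule R N} (hC : SetLike.IsHomogeneous 𝒩 C) :
    SetLike.IsHomogeneous ℳ (C.comap g) := by
  intro i x hx
  rw [Submodule.mem_comap, map_decompose_of_map_mem hg]
  exact hC i hx

end Decomposition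

namespace HomLieSuper

variable {F : Type*} [Field F] {L : Type*} [AddCommGroup L] [Module F L]

/-- The decomposition of `L` into its even and odd parts, chosen from `internal` in order to make
Mathlib's projections `DirectSum.decompose` onto graded components available. -/
noncomputable instance gradeDecomposition (S : HomLieSuper F L) :
    DirectSum.Decomposition S.grade :=
  S.internal.chooseDecomposition

lemma isHomogeneous_iff_exists_add (S : HomLieSuper F L) (H : Submodule F L) :
    DirectSum.SetLike.IsHomogeneous S.grade H ↔
      ∀ x ∈ H, ∃ x0 ∈ H ⊓ S.grade 0, ∃ x1 ∈ H ⊓ S.grade 1, x = x0 + x1 := by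
  refine ⟨fun hH x hx => ?_, fun hH i x hx => ?_⟩
  · refine ⟨_, ⟨hH 0 hx, SetLike.coe_mem _⟩, _, ⟨hH 1 hx, SetLike.coe_mem _⟩, ?_⟩
    exact (sum_decompose (ℳ := S.grade) x).symm.trans (Fin.sum_univ_two _)
  · have hdecompose {j : ZMod 2} {y : L} (hy : y ∈ H ⊓ S.grade j) :
        (DirectSum.decompose S.grade y i : L) ∈ H := by
      obtain rfl | hji := eq_or_ne j i
      · rw [DirectSum.decompose_of_mem_same S.grade hy.2]
        exact hy.1
      · rw [DirectSum.decompose_of_mem_ne S.grade hy.2 hji]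
        exact H.zero_mem
    obtain ⟨x0, hx0, x1, hx1, rfl⟩ := hH x hx
    rw [DirectSum.decompose_add, DirectSum.add_apply, Submodule.coe_add]
    exact H.add_mem (hdecompose hx0) (hdecompose hx1)

lemma add_mem_zeroOf (S : HomLieSuper F L) {H : Submodule F L} {x y : L}
    (hx : x ∈ S.zeroOf H) (hy : y ∈ S.zeroOf H) : x + y ∈ S.zeroOf H :=
  (H ⊓ S.zeroSub).add_mem hx hy

lemma smul_mem_zeroOf (S : HomLieSuper F L) {H : Submodule F L} (k : F) {x : L}
    (hx : x ∈ S.zeroOf H) : k • x ∈ S.zeroOf H :=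
  (H ⊓ S.zeroSub).smul_mem k hx

end HomLieSuper

namespace IsHomLieSuperMorphism

variable {F : Type*} [Field F] {L : Type*} [AddCommGroup L] [Module F L]
  {G : Type*} [AddCommGroup G] [Module F G]
  {S : HomLieSuper F L} {T : HomLieSuper F G} {φ : L →ₗ[F] G} {C : Submodule F G}

lemma map_mem_grade (hφ : IsHomLieSuperMorphism S T φ) (i : ZMod 2) (x : L) (hx : x ∈ S.grade i) :
    φ x ∈ T.grade i :=
  hφ.1 i x hx

lemma map_bracket (hφ : IsHomLieSuperMorphism S T φ) (x y : L) :
    φ (S.bracket x y) = T.bracket (φ x) (φ y) :=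
  hφ.2.1 x y

lemma map_alpha (hφ : IsHomLieSuperMorphism S T φ) (x : L) : φ (S.α x) = T.α (φ x) :=
  hφ.2.2 x

lemma map_adA_pow (hφ : IsHomLieSuperMorphism S T φ) (x y : L) (n : ℕ) :
    φ ((S.adA x ^ n) y) = (T.adA (φ x) ^ n) (φ y) := by
  have hcomm : T.adA (φ x) ∘ₗ φ = φ ∘ₗ S.adA x := by
    ext z
    simp [HomLieSuper.adA, hφ.map_bracket, hφ.map_alpha]
  exact (LinearMap.congr_fun (Module.End.commute_pow_left_of_commute hcomm n) y).symm

lemma map_adPolyCoeff (hφ : IsHomLieSuperMorphism S T φ) (x y : L) (k j : ℕ) :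
    φ (adPolyCoeff S.bracket S.α x y k j) = adPolyCoeff T.bracket T.α (φ x) (φ y) k j := by
  induction k generalizing j with
  | zero => cases j <;> simp [adPolyCoeff]
  | succ k ih => cases j <;> simp [adPolyCoeff, hφ.map_bracket, hφ.map_alpha, ih]

lemma map_sPoly (hφ : IsHomLieSuperMorphism S T φ) (p : ℕ) (x y : L) (i : ℕ) :
    φ (S.sPoly p x y i) = T.sPoly p (φ x) (φ y) i := by
  rw [HomLieSuper.sPoly, HomLieSuper.sPoly, map_smul, hφ.map_adPolyCoeff]

lemma isSub_comap (hφ : IsHomLieSuperMorphism S T φ) (hC : T.IsSub C) : S.IsSub (C.comap φ) := by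
  obtain ⟨hgrade, hα, hbracket⟩ := hC
  refine ⟨?_, fun x hx => ?_, fun x hx y hy => ?_⟩
  · rw [← HomLieSuper.isHomogeneous_iff_exists_add] at hgrade ⊢
    exact isHomogeneous_comap hφ.map_mem_grade hgrade
  · rw [Submodule.mem_comap, hφ.map_alpha]
    exact hα _ hx
  · rw [Submodule.mem_comap, hφ.map_bracket]
    exact hbracket _ hx _ hy

lemma map_mem_zeroOf_iff (hφ : IsHomLieSuperMorphism S T φ) (hinj : Function.Injective φ) {x : L} :
    φ x ∈ T.zeroOf C ↔ x ∈ S.zeroOf (C.comap φ) := by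
  have hgrade : φ x ∈ T.grade 0 ↔ x ∈ S.grade 0 :=
    ⟨mem_of_map_mem_of_injective hinj hφ.map_mem_grade, hφ.map_mem_grade 0 x⟩
  have hα : T.α (φ x) = φ x ↔ S.α x = x := by rw [← hφ.map_alpha, hinj.eq_iff]
  exact and_congr Iff.rfl (and_congr hgrade hα)

lemma isPMapOn_comap (hφ : IsHomLieSuperMorphism S T φ) (hinj : Function.Injective φ)
    {p : ℕ} {pm : G → G} (hpm : T.IsPMapOn p C pm) {pm' : L → L}
    (hlift : ∀ x ∈ S.zeroOf (C.comap φ), φ (pm' x) = pm (φ x)) :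
    S.IsPMapOn p (C.comap φ) pm' := by
  obtain ⟨hmem, had, hsmul, hadd⟩ := hpm
  have hmap {x : L} (hx : x ∈ S.zeroOf (C.comap φ)) : φ x ∈ T.zeroOf C :=
    (hφ.map_mem_zeroOf_iff hinj).2 hx
  refine ⟨fun x hx => ?_, fun x hx y hy => hinj ?_, fun k x hx => hinj ?_,
    fun x hx y hy => hinj ?_⟩
  · rw [← hφ.map_mem_zeroOf_iff hinj, hlift x hx]
    exact hmem _ (hmap hx)
  · calc φ ((S.adA x ^ p) y) = (T.adA (φ x) ^ p) (φ y) := hφ.map_adA_pow x y p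
      _ = T.bracket (pm (φ x)) (T.α (φ y)) := had _ (hmap hx) _ hy
      _ = φ (S.bracket (pm' x) (S.α y)) := by rw [hφ.map_bracket, hφ.map_alpha, hlift x hx]
  · calc φ (pm' (k • x)) = pm (k • φ x) := by rw [hlift _ (S.smul_mem_zeroOf k hx), map_smul]
      _ = k ^ p • pm (φ x) := hsmul k _ (hmap hx)
      _ = φ (k ^ p • pm' x) := by rw [map_smul, hlift x hx]
  · calc φ (pm' (x + y)) = pm (φ x + φ y) := by rw [hlift _ (S.add_mem_zeroOf hx hy), map_add]
      _ = pm (φ x) + pm (φ y) + ∑ i ∈ Finset.Icc 1 (p - 1), T.sPoly p (φ x) (φ y) i :=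
        hadd _ (hmap hx) _ (hmap hy)
      _ = φ (pm' x + pm' y + ∑ i ∈ Finset.Icc 1 (p - 1), S.sPoly p x y i) := by
        simp only [map_add, map_sum, hφ.map_sPoly, hlift x hx, hlift y hy]

end IsHomLieSuperMorphism

theorem preimage_restricted_general {F : Type*} [Field F] {L : Type*} [AddCommGroup L] [Module F L]
    {G : Type*} [AddCommGroup G] [Module F G] (p : ℕ) (S : HomLieSuper F L) (T : HomLieSuper F G)
    (φ : L →ₗ[F] G) (hinj : Function.Injective φ) (hmor : IsHomLieSuperMorphism S T φ)
    (C : Submodule F G) (hC : T.IsSub C)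
    (pmC : G → G) (hpmC : T.IsPMapOn p C pmC)
    (hrange : ∀ x ∈ S.zeroOf (C.comap φ), pmC (φ x) ∈ Set.range φ) :
    S.IsSub (C.comap φ) ∧
      ∃ pm' : L → L, (∀ x ∈ S.zeroOf (C.comap φ), φ (pm' x) = pmC (φ x)) ∧
        S.IsPMapOn p (C.comap φ) pm' := by
  choose! pm' hlift using hrange
  exact ⟨hmor.isSub_comap hC, pm', hlift, hmor.isPMapOn_comap hinj hpmC hlift⟩

/-- Preimage of a restricted subalgebra under an injective morphism: if `C`
is a Hom-Lie subsuperalgebra of `Γ` carrying a `p`-map `[p]`, and `(φ x)^{[p]}` is in the image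
of `φ` for all `x ∈ (φ⁻¹ C)⁰`, then `φ⁻¹ C` with `x^{[p]'} = φ⁻¹ ((φ x)^{[p]})` is a
restricted Hom-Lie superalgebra. -/
theorem preimage_restricted {F : Type*} [Field F] {L : Type*} [AddCommGroup L] [Module F L]
    {G : Type*} [AddCommGroup G] [Module F G]
    (p : ℕ) [Fact p.Prime] [CharP F p] (hp : 3 < p)
    (S : HomLieSuper F L) (hmS : S.Mult) (T : HomLieSuper F G) (hmT : T.Mult)
    (φ : L →ₗ[F] G) (hinj : Function.Injective φ) (hmor : IsHomLieSuperMorphism S T φ)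
    (C : Submodule F G) (hC : T.IsSub C)
    (pmC : G → G) (hpmC : T.IsPMapOn p C pmC)
    (hrange : ∀ x ∈ S.zeroOf (C.comap φ), pmC (φ x) ∈ Set.range φ) :
    S.IsSub (C.comap φ) ∧
      ∃ pm' : L → L, (∀ x ∈ S.zeroOf (C.comap φ), φ (pm' x) = pmC (φ x)) ∧
        S.IsPMapOn p (C.comap φ) pm' :=
  preimage_restricted_general p S T φ hinj hmor C hC pmC hpmC hrange
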